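/- Fix j ∈ {1,…,J}, assume 1 ≤ k ≤ n, and assume r > r*_j, where r*_j = inf{ B(M, M_t) : M a model with M ∈ 𝒩_j }. Then the partial bootstrap-robust nearest-neighbors value sup{ Σ_{m∈N_j} w(m)·ℓ(m)·P(m) : s > 0, P : 𝔐 → [0,∞), Σ_{m∈N_j} w(m)·P(m) = 1, Σ_{m∈𝔐} P(m) = s, Σ_{m∈N_j} P(m) ≥ s·k/n, Σ_{m∈N_{j−1}} P(m) ≤ s·(k−1)/n, Σ_{m∈𝔐} P(m)·log(P(m)/(s·M_t(m))) ≤ s·r } equals the dual value inf{ α ∈ ℝ : there exist ν > 0 and η₁, η₂ ≥ 0 such that ν·log( Σ_{m∈N_{j−1}} exp([(ℓ(m) − α)·w(m) + η₁ − η₂]/ν)·M_t(m) + Σ_{m∈N_j∖N_{j−1}} exp([(ℓ(m) − α)·w(m) + η₁]/ν)·M_t(m) + Σ_{m∈𝔐∖N_j} M_t(m) ) + r·ν − (k/n)·(η₁ − η₂) − η₂/n ≤ 0 }. -/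

import Mathlib

open Finset
open Classical

/-- A model on a finite set `𝔐` : nonnegative weights summing to one. -/
def IsModel {𝔐 : Type*} [Fintype 𝔐] (M : 𝔐 → ℝ) : Prop :=
  (∀ m, 0 ≤ M m) ∧ ∑ m, M m = 1

/-- The bootstrap (relative entropy) distance `B(M, M') = ∑ M log (M / M')`
between models, with the convention `0 · log 0 = 0` (the reference model `M'`
is assumed strictly positive). -/
noncomputable def bootDist {𝔐 : Type*} [Fintype 𝔐] (M M' : 𝔐 → ℝ) : ℝ :=
  ∑ m, if M m = 0 then 0 else M m * Real.log (M m / M' m)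

/-- Membership of a model in the `j`-th model set `𝒩_j` determined by the
nested neighborhoods `N`, with `k` nearest neighbors out of `n` data points. -/
def MemNbhdModelSet {𝔐 : Type*} [Fintype 𝔐] (N : ℕ → Finset 𝔐) (n k : ℕ)
    (j : ℕ) (M : 𝔐 → ℝ) : Prop :=
  (k : ℝ) / n ≤ ∑ m ∈ N j, M m ∧ ∑ m ∈ N (j - 1), M m ≤ ((k : ℝ) - 1) / n

lemma boot_eq {𝔐 : Type*} [Fintype 𝔐] (q : 𝔐 → ℝ) (hq : ∀ m, 0 < q m) (M : 𝔐 → ℝ) :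
    bootDist M q = ∑ m, (-(Real.negMulLog (M m)) - M m * Real.log (q m)) := by
  unfold bootDist
  refine Finset.sum_congr rfl fun m _ => ?_
  split_ifs with h
  · simp [h]
  · rw [Real.log_div h (hq m).ne', Real.negMulLog]; ring

lemma boot_cont {𝔐 : Type*} [Fintype 𝔐] (q : 𝔐 → ℝ) (hq : ∀ m, 0 < q m) :
    Continuous (fun M : 𝔐 → ℝ => bootDist M q) := by
  simp only [boot_eq q hq]
  refine continuous_finsetSum _ fun m _ => ?_
  have := Real.continuous_negMulLog
  fun_prop

lemma boot_conv {𝔐 : Type*} [Fintype 𝔐] (q : 𝔐 → ℝ) (hq : ∀ m, 0 < q m) (M M' : 𝔐 → ℝ)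
    (hM : ∀ m, 0 ≤ M m) (hM' : ∀ m, 0 ≤ M' m) (a b : ℝ) (ha : 0 ≤ a) (hb : 0 ≤ b)
    (hab : a + b = 1) :
    bootDist (a • M + b • M') q ≤ a * bootDist M q + b * bootDist M' q := by
  simp only [boot_eq q hq]
  rw [Finset.mul_sum, Finset.mul_sum, ← Finset.sum_add_distrib]
  refine Finset.sum_le_sum fun m _ => ?_
  have := Real.concaveOn_negMulLog.2 (x := M m) (hM m) (y := M' m) (hM' m) ha hb hab
  simp only [smul_eq_mul, Pi.add_apply, Pi.smul_apply] at *
  nlinarith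

lemma gibbs {𝔐 : Type*} [Fintype 𝔐] [Nonempty 𝔐] (q : 𝔐 → ℝ) (hq : ∀ m, 0 < q m) (M : 𝔐 → ℝ)
    (hM : IsModel M) (c : 𝔐 → ℝ) (ν : ℝ) (hν : 0 < ν) :
    ∑ m, c m * M m ≤ ν * Real.log (∑ m, Real.exp (c m / ν) * q m) + ν * bootDist M q := by
  set Z := ∑ m, Real.exp (c m / ν) * q m with hZ
  have hZpos : 0 < Z := Finset.sum_pos (fun m _ => mul_pos (Real.exp_pos _) (hq m)) univ_nonempty
  have key : ∀ m, M m * (c m / ν) - M m * Real.log Z -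
      (if M m = 0 then 0 else M m * Real.log (M m / q m)) ≤
      Real.exp (c m / ν) * q m / Z - M m := by
    intro m
    split_ifs with h
    · have := hq m
      simp only [h]; simp; positivity
    · have hp : 0 < M m := lt_of_le_of_ne (hM.1 m) (Ne.symm h)
      have hx : 0 < Real.exp (c m / ν) * q m / Z / M m := by
        have := hq m; positivity
      have h1 := Real.log_le_sub_one_of_pos hx
      rw [Real.log_div (by have := hq m; positivity) hp.ne',
        Real.log_div (by have := hq m; positivity) hZpos.ne',
        Real.log_mul (Real.exp_pos _).ne' (hq m).ne', Real.log_exp] at h1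
      rw [Real.log_div hp.ne' (hq m).ne']
      have h2 := mul_le_mul_of_nonneg_left h1 hp.le
      have h3 : M m * (Real.exp (c m / ν) * q m / Z / M m - 1) =
        Real.exp (c m / ν) * q m / Z - M m := by field_simp
      linarith
  have hs := Finset.sum_le_sum fun m (_ : m ∈ univ) => key m
  simp only [Finset.sum_sub_distrib, ← Finset.sum_mul, ← Finset.sum_div] at hs
  rw [← hZ, div_self hZpos.ne', hM.2] at hs
  have h4 : ∑ m, M m * (c m / ν) = (∑ m, c m * M m) / ν := by
    rw [Finset.sum_div]; exact Finset.sum_congr rfl fun m _ => by ring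
  rw [h4] at hs
  have h5 : (∑ m, c m * M m) / ν ≤ Real.log Z + bootDist M q := by
    unfold bootDist; linarith
  rw [div_le_iff₀ hν] at h5
  linarith

lemma gibbs_opt {𝔐 : Type*} [Fintype 𝔐] [Nonempty 𝔐] (q : 𝔐 → ℝ) (hq : ∀ m, 0 < q m)
    (c : 𝔐 → ℝ) (ν : ℝ) (hν : 0 < ν) : ∃ M, IsModel M ∧
    ν * Real.log (∑ m, Real.exp (c m / ν) * q m) = ∑ m, c m * M m - ν * bootDist M q := by
  set Z := ∑ m, Real.exp (c m / ν) * q m with hZ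
  have hZpos : 0 < Z := Finset.sum_pos (fun m _ => mul_pos (Real.exp_pos _) (hq m)) univ_nonempty
  have hsum : ∑ m, Real.exp (c m / ν) * q m / Z = 1 := by
    rw [← Finset.sum_div, ← hZ, div_self hZpos.ne']
  refine ⟨fun m => Real.exp (c m / ν) * q m / Z,
    ⟨fun m => by have := hq m; positivity, hsum⟩, ?_⟩
  have hb : bootDist (fun m => Real.exp (c m / ν) * q m / Z) q =
      (∑ m, c m * (Real.exp (c m / ν) * q m / Z)) / ν - Real.log Z := by
    unfold bootDist
    have : ∀ m, (if Real.exp (c m / ν) * q m / Z = 0 then 0 else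
        Real.exp (c m / ν) * q m / Z * Real.log (Real.exp (c m / ν) * q m / Z / q m)) =
        c m * (Real.exp (c m / ν) * q m / Z) / ν -
          (Real.exp (c m / ν) * q m / Z) * Real.log Z := by
      intro m
      have := hq m
      have h0 : Real.exp (c m / ν) * q m / Z ≠ 0 := by positivity
      rw [if_neg h0, Real.log_div h0 this.ne', Real.log_div (by positivity) hZpos.ne',
        Real.log_mul (by positivity) this.ne', Real.log_exp]
      ring
    simp only [this, Finset.sum_sub_distrib, ← Finset.sum_mul, ← Finset.sum_div]
    rw [← hZ, div_self hZpos.ne', one_mul]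
  rw [hb]; field_simp; ring

lemma boot_nonneg {𝔐 : Type*} [Fintype 𝔐] [Nonempty 𝔐] (q : 𝔐 → ℝ) (hq : ∀ m, 0 < q m)
    (hq1 : IsModel q) (M : 𝔐 → ℝ) (hM : IsModel M) : 0 ≤ bootDist M q := by
  have := gibbs q hq M hM 0 1 one_pos
  simpa [hq1.2] using this

open scoped Pointwise in
lemma core {𝔐 : Type*} [Fintype 𝔐] [Nonempty 𝔐] (q : 𝔐 → ℝ) (hq : ∀ m, 0 < q m)
    (hq1 : IsModel q) (a b d : 𝔐 → ℝ) (β γ r : ℝ)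
    (M0 : 𝔐 → ℝ) (hM0 : IsModel M0) (h0b : β ≤ ∑ m, b m * M0 m) (h0d : γ ≤ ∑ m, d m * M0 m)
    (h0r : bootDist M0 q ≤ r)
    (H : ∀ M, IsModel M → β ≤ ∑ m, b m * M m → γ ≤ ∑ m, d m * M m → bootDist M q ≤ r →
      ∑ m, a m * M m < 0) :
    ∃ ν : ℝ, 0 < ν ∧ ∃ η₁ : ℝ, 0 ≤ η₁ ∧ ∃ η₂ : ℝ, 0 ≤ η₂ ∧
      ν * Real.log (∑ m, Real.exp ((a m + η₁ * b m + η₂ * d m) / ν) * q m) + r * ν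
        - η₁ * β - η₂ * γ ≤ 0 := by
  let g : (𝔐 → ℝ) → ℝ × ℝ × ℝ × ℝ := fun M =>
    (∑ m, a m * M m, ∑ m, b m * M m - β, ∑ m, d m * M m - γ, r - bootDist M q)
  let D : Set (𝔐 → ℝ) := stdSimplex ℝ 𝔐
  have hD : ∀ M, M ∈ D ↔ IsModel M := fun M => Iff.rfl
  have hg : Continuous g := by
    have := boot_cont q hq
    fun_prop
  let A : Set (ℝ × ℝ × ℝ × ℝ) := g '' D + Set.Iic (0 : ℝ × ℝ × ℝ × ℝ)
  have hAcl : IsClosed A := IsClosed.add_left_of_isCompact isClosed_Iic ((isCompact_stdSimplex ℝ 𝔐).image hg)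
  have memA : ∀ y, y ∈ A ↔ ∃ M, IsModel M ∧ y ≤ g M := by
    intro y
    constructor
    · rintro ⟨_, ⟨M, hM, rfl⟩, z, hz, rfl⟩
      exact ⟨M, hM, by simpa using hz⟩
    · rintro ⟨M, hM, h⟩
      exact ⟨g M, ⟨M, hM, rfl⟩, y - g M, by simpa using h, by simp⟩
  have hAconv : Convex ℝ A := by
    intro x hx y hy s t hs ht hst
    rw [memA] at *
    obtain ⟨M, hM, hxM⟩ := hx
    obtain ⟨M', hM', hyM⟩ := hy
    refine ⟨s • M + t • M', convex_stdSimplex ℝ 𝔐 hM hM' hs ht hst, ?_⟩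
    have h1 : s • x + t • y ≤ s • g M + t • g M' :=
      add_le_add (smul_le_smul_of_nonneg_left hxM hs) (smul_le_smul_of_nonneg_left hyM ht)
    refine h1.trans ?_
    have lin : ∀ e : 𝔐 → ℝ, ∑ m, e m * (s • M + t • M') m =
        s * ∑ m, e m * M m + t * ∑ m, e m * M' m := by
      intro e
      rw [Finset.mul_sum, Finset.mul_sum, ← Finset.sum_add_distrib]
      refine Finset.sum_congr rfl fun m _ => ?_
      simp; ring
    have hc := boot_conv q hq M M' hM.1 hM'.1 s t hs ht hst
    have ht' : t = 1 - s := by linarith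
    simp only [g, Prod.le_def, lin, Prod.fst_add, Prod.snd_add, Prod.smul_fst, Prod.smul_snd,
      smul_eq_mul]
    subst ht'
    refine ⟨le_refl _, by linarith, by linarith, by linarith⟩
  have h0A : (0 : ℝ × ℝ × ℝ × ℝ) ∉ A := by
    rw [memA]
    rintro ⟨M, hM, h⟩
    simp only [g, Prod.le_def, Prod.fst_zero, Prod.snd_zero] at h
    have := H M hM (by linarith [h.2.1]) (by linarith [h.2.2.1]) (by linarith [h.2.2.2])
    linarith [h.1]
  obtain ⟨f, u, hfu, hu⟩ := geometric_hahn_banach_closed_point hAconv hAcl h0A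
  rw [map_zero] at hu
  have hf : ∀ x y z t : ℝ, f (x, y, z, t) = x * f (1, 0, 0, 0) + y * f (0, 1, 0, 0) +
      z * f (0, 0, 1, 0) + t * f (0, 0, 0, 1) := by
    intro x y z t
    have : ((x, y, z, t) : ℝ × ℝ × ℝ × ℝ) = x • (1, 0, 0, 0) + y • (0, 1, 0, 0) +
      z • (0, 0, 1, 0) + t • (0, 0, 0, 1) := by simp
    rw [this]; simp only [map_add, map_smul, smul_eq_mul]
  -- nonnegativity of multipliers
  have hpos : ∀ e : ℝ × ℝ × ℝ × ℝ, 0 ≤ e → 0 ≤ f e := by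
    intro e he
    by_contra hneg
    push Not at hneg
    set T : ℝ := max 0 ((u - f (g M0)) / (-f e)) with hT
    have hm : g M0 - T • e ∈ A := by
      rw [memA]
      exact ⟨M0, hM0, sub_le_self _ (smul_nonneg (le_max_left _ _) he)⟩
    have h1 := hfu _ hm
    rw [map_sub, map_smul, smul_eq_mul] at h1
    have h2 : (u - f (g M0)) / (-f e) ≤ T := le_max_right _ _
    rw [div_le_iff₀ (by linarith)] at h2
    linarith
  set l0 := f (1, 0, 0, 0) with hl0
  set l1 := f (0, 1, 0, 0) with hl1
  set l2 := f (0, 0, 1, 0) with hl2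
  set l3 := f (0, 0, 0, 1) with hl3
  have p0 : 0 ≤ l0 := hpos _ (by simp [Prod.le_def])
  have p1 : 0 ≤ l1 := hpos _ (by simp [Prod.le_def])
  have p2 : 0 ≤ l2 := hpos _ (by simp [Prod.le_def])
  have p3 : 0 ≤ l3 := hpos _ (by simp [Prod.le_def])
  have hL : ∀ M, IsModel M → (∑ m, a m * M m) * l0 + (∑ m, b m * M m - β) * l1 +
      (∑ m, d m * M m - γ) * l2 + (r - bootDist M q) * l3 < u := by
    intro M hM
    have := hfu (g M) ((memA _).2 ⟨M, hM, le_refl _⟩)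
    rwa [hf] at this
  have l0pos : 0 < l0 := by
    rcases p0.lt_or_eq with h | h
    · exact h
    · exfalso
      have h1 := hL M0 hM0
      rw [← h] at h1
      have := mul_nonneg (sub_nonneg.2 h0b) p1
      have := mul_nonneg (sub_nonneg.2 h0d) p2
      have := mul_nonneg (sub_nonneg.2 h0r) p3
      linarith
  -- bump
  have rn : 0 ≤ r := (boot_nonneg q hq hq1 M0 hM0).trans h0r
  set ε : ℝ := -u / (r + 1) with hε
  have εpos : 0 < ε := div_pos (by linarith) (by linarith)
  have hεr : ε * r ≤ -u := by
    rw [hε, div_mul_eq_mul_div, div_le_iff₀ (by linarith)]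
    nlinarith
  have hνpos : 0 < (l3 + ε) / l0 := by positivity
  refine ⟨(l3 + ε) / l0, hνpos, l1 / l0, by positivity, l2 / l0, by positivity, ?_⟩
  obtain ⟨M, hM, hMeq⟩ := gibbs_opt q hq (fun m => a m + l1 / l0 * b m + l2 / l0 * d m) _ hνpos
  rw [hMeq]
  have hB := boot_nonneg q hq hq1 M hM
  have h1 := hL M hM
  have hexp : ∑ m, (a m + l1 / l0 * b m + l2 / l0 * d m) * M m =
      ∑ m, a m * M m + l1 / l0 * ∑ m, b m * M m + l2 / l0 * ∑ m, d m * M m := by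
    simp only [Finset.mul_sum, ← Finset.sum_add_distrib]
    exact Finset.sum_congr rfl fun m _ => by ring
  rw [hexp]
  have h2 : ((∑ m, a m * M m) * l0 + (∑ m, b m * M m - β) * l1 +
      (∑ m, d m * M m - γ) * l2 + (r - bootDist M q) * (l3 + ε)) / l0 ≤ 0 := by
    apply div_nonpos_of_nonpos_of_nonneg _ p0
    nlinarith [mul_nonneg hB εpos.le]
  refine le_trans (le_of_eq ?_) h2
  field_simp
  ring

lemma primal_set {𝔐 : Type*} [Fintype 𝔐] (w ℓ Mt : 𝔐 → ℝ) (n k j : ℕ) (N : ℕ → Finset 𝔐) (r : ℝ)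
    (hW : ∀ M : 𝔐 → ℝ, IsModel M → MemNbhdModelSet N n k j M → 0 < ∑ m ∈ N j, w m * M m) :
    {v : ℝ | ∃ s : ℝ, 0 < s ∧ ∃ P : 𝔐 → ℝ, (∀ m, 0 ≤ P m) ∧
        (∑ m ∈ N j, w m * P m) = 1 ∧ (∑ m, P m) = s ∧
        s * (k : ℝ) / n ≤ ∑ m ∈ N j, P m ∧
        (∑ m ∈ N (j - 1), P m) ≤ s * ((k : ℝ) - 1) / n ∧
        (∑ m, if P m = 0 then 0 else P m * Real.log (P m / (s * Mt m))) ≤ s * r ∧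
        v = ∑ m ∈ N j, w m * ℓ m * P m} =
    {v : ℝ | ∃ M : 𝔐 → ℝ, IsModel M ∧ MemNbhdModelSet N n k j M ∧ bootDist M Mt ≤ r ∧
      v * ∑ m ∈ N j, w m * M m = ∑ m ∈ N j, w m * ℓ m * M m} := by
  have hent : ∀ (s : ℝ) (M : 𝔐 → ℝ), 0 < s →
      (∑ m, if s * M m = 0 then 0 else s * M m * Real.log (s * M m / (s * Mt m))) =
        s * bootDist M Mt := by
    intro s M hs
    unfold bootDist
    rw [Finset.mul_sum]
    refine Finset.sum_congr rfl fun m _ => ?_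
    rw [mul_div_mul_left _ _ hs.ne']
    by_cases h : M m = 0
    · simp [h]
    · rw [if_neg h, if_neg (mul_ne_zero hs.ne' h)]; ring
  have hs1 : ∀ (A : Finset 𝔐) (e M : 𝔐 → ℝ) (s : ℝ), ∑ m ∈ A, e m * (s * M m) =
      s * ∑ m ∈ A, e m * M m := by
    intro A e M s
    rw [Finset.mul_sum]
    exact Finset.sum_congr rfl fun m _ => by ring
  ext v
  constructor
  · rintro ⟨s, hs, P, hP, h1, h2, h3, h4, h5, rfl⟩
    obtain ⟨M, rfl⟩ : ∃ M : 𝔐 → ℝ, P = fun m => s * M m :=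
      ⟨fun m => P m / s, by funext m; field_simp⟩
    simp only [hs1, ← Finset.mul_sum, hent s M hs] at *
    refine ⟨M, ⟨fun m => nonneg_of_mul_nonneg_right (hP m) hs, ?_⟩, ⟨?_, ?_⟩, ?_, ?_⟩
    · exact mul_left_cancel₀ hs.ne' (by rw [h2, mul_one])
    · rw [mul_div_assoc] at h3; exact le_of_mul_le_mul_left h3 hs
    · rw [mul_div_assoc] at h4; exact le_of_mul_le_mul_left h4 hs
    · exact le_of_mul_le_mul_left h5 hs
    · rw [mul_right_comm, h1, one_mul]
  · rintro ⟨M, hM, hMn, hr, hv⟩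
    have hWM := hW M hM hMn
    set W := ∑ m ∈ N j, w m * M m with hWd
    have hs : 0 < W⁻¹ := inv_pos.2 hWM
    refine ⟨W⁻¹, hs, fun m => W⁻¹ * M m, fun m => mul_nonneg hs.le (hM.1 m), ?_⟩
    simp only [hs1, ← Finset.mul_sum, hent _ M hs]
    refine ⟨inv_mul_cancel₀ hWM.ne', by rw [hM.2, mul_one], ?_, ?_, ?_, ?_⟩
    · rw [mul_div_assoc]; exact mul_le_mul_of_nonneg_left hMn.1 hs.le
    · rw [mul_div_assoc]; exact mul_le_mul_of_nonneg_left hMn.2 hs.le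
    · exact mul_le_mul_of_nonneg_left hr hs.le
    · rw [← hv]; field_simp

/-- **dual representation of the partial bootstrap robust
nearest-neighbors cost.** For a robustness radius `r` strictly larger than the
minimum radius `r*_j`, the value of the `j`-th entropy-constrained partial
primal program equals the value of its Lagrangian dual. -/
theorem bootstrap_robust_nearest_neighbors_duality
    {𝔐 : Type*} [Fintype 𝔐] [Nonempty 𝔐]
    (w ℓ : 𝔐 → ℝ) (hw : ∀ m, 0 < w m)
    (Mt : 𝔐 → ℝ) (hMt : IsModel Mt) (hMtpos : ∀ m, 0 < Mt m)
    (n k : ℕ) (hk : 1 ≤ k) (hkn : k ≤ n)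
    (J : ℕ) (N : ℕ → Finset 𝔐)
    (hN0 : N 0 = ∅) (hNJ : N J = Finset.univ)
    (hNcard : ∀ j ≤ J, (N j).card = j)
    (hNmono : ∀ j < J, N j ⊆ N (j + 1))
    (j : ℕ) (hj : j ∈ Finset.Icc 1 J)
    (hfeas : ∃ M : 𝔐 → ℝ, IsModel M ∧ MemNbhdModelSet N n k j M)
    (r : ℝ)
    (hr : sInf {b : ℝ | ∃ M : 𝔐 → ℝ, IsModel M ∧ MemNbhdModelSet N n k j M ∧
        b = bootDist M Mt} < r) :
    sSup {v : ℝ | ∃ s : ℝ, 0 < s ∧ ∃ P : 𝔐 → ℝ, (∀ m, 0 ≤ P m) ∧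
        (∑ m ∈ N j, w m * P m) = 1 ∧ (∑ m, P m) = s ∧
        s * (k : ℝ) / n ≤ ∑ m ∈ N j, P m ∧
        (∑ m ∈ N (j - 1), P m) ≤ s * ((k : ℝ) - 1) / n ∧
        (∑ m, if P m = 0 then 0 else P m * Real.log (P m / (s * Mt m))) ≤ s * r ∧
        v = ∑ m ∈ N j, w m * ℓ m * P m} =
    sInf {α : ℝ | ∃ ν : ℝ, 0 < ν ∧ ∃ η₁ : ℝ, 0 ≤ η₁ ∧ ∃ η₂ : ℝ, 0 ≤ η₂ ∧
        ν * Real.log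
            ((∑ m ∈ N (j - 1), Real.exp (((ℓ m - α) * w m + η₁ - η₂) / ν) * Mt m) +
             (∑ m ∈ N j \ N (j - 1), Real.exp (((ℓ m - α) * w m + η₁) / ν) * Mt m) +
             (∑ m ∈ Finset.univ \ N j, Mt m)) +
          r * ν - ((k : ℝ) / n) * (η₁ - η₂) - η₂ / n ≤ 0} := by
  obtain ⟨hj1, hjJ⟩ := Finset.mem_Icc.1 hj
  have hsub : N (j - 1) ⊆ N j := by
    have := hNmono (j - 1) (by omega)
    rwa [Nat.sub_add_cancel hj1] at this
  have hnpos : (0 : ℝ) < n := by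
    have : 0 < n := by omega
    exact_mod_cast this
  have hkpos : (0 : ℝ) < k := by
    have : 0 < k := by omega
    exact_mod_cast this
  have hWpos : ∀ M : 𝔐 → ℝ, IsModel M → MemNbhdModelSet N n k j M →
      0 < ∑ m ∈ N j, w m * M m := by
    intro M hM hm
    have h1 : 0 < ∑ m ∈ N j, M m := lt_of_lt_of_le (by positivity) hm.1
    obtain ⟨i, hi, hi0⟩ := Finset.exists_lt_of_sum_lt (s := N j) (f := fun _ => (0 : ℝ)) (g := M)
      (by simpa using h1)
    exact Finset.sum_pos' (fun m _ => mul_nonneg (hw m).le (hM.1 m)) ⟨i, hi, mul_pos (hw i) hi0⟩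
  rw [primal_set w ℓ Mt n k j N r hWpos]
  -- feasible point
  obtain ⟨M0, hM0, hM0n, hM0r⟩ : ∃ M, IsModel M ∧ MemNbhdModelSet N n k j M ∧
      bootDist M Mt ≤ r := by
    obtain ⟨M1, h1, h2⟩ := hfeas
    obtain ⟨b, ⟨M, hM, hMn, rfl⟩, hb⟩ := exists_lt_of_csInf_lt (by exact ⟨_, M1, h1, h2, rfl⟩) hr
    exact ⟨M, hM, hMn, hb.le⟩
  have linA : ∀ (α : ℝ) (M : 𝔐 → ℝ), ∑ m, (if m ∈ N j then (ℓ m - α) * w m else 0) * M m =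
      ∑ m ∈ N j, w m * ℓ m * M m - α * ∑ m ∈ N j, w m * M m := by
    intro α M
    simp only [ite_mul, zero_mul, Finset.sum_ite_mem, Finset.univ_inter]
    rw [Finset.mul_sum, ← Finset.sum_sub_distrib]
    exact Finset.sum_congr rfl fun m _ => by ring
  have linB : ∀ (M : 𝔐 → ℝ), ∑ m, (if m ∈ N j then (1 : ℝ) else 0) * M m = ∑ m ∈ N j, M m := by
    intro M
    simp only [ite_mul, zero_mul, one_mul, Finset.sum_ite_mem, Finset.univ_inter]
  have linD : ∀ (M : 𝔐 → ℝ), ∑ m, (if m ∈ N (j - 1) then (-1 : ℝ) else 0) * M m =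
      - ∑ m ∈ N (j - 1), M m := by
    intro M
    simp only [ite_mul, zero_mul, neg_mul, one_mul, Finset.sum_ite_mem, Finset.univ_inter,
      Finset.sum_neg_distrib]
  have hZ : ∀ α ν η₁ η₂ : ℝ,
      ((∑ m ∈ N (j - 1), Real.exp (((ℓ m - α) * w m + η₁ - η₂) / ν) * Mt m) +
             (∑ m ∈ N j \ N (j - 1), Real.exp (((ℓ m - α) * w m + η₁) / ν) * Mt m) +
             (∑ m ∈ Finset.univ \ N j, Mt m)) =
      ∑ m, Real.exp (((if m ∈ N j then (ℓ m - α) * w m else 0) +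
        η₁ * (if m ∈ N j then (1 : ℝ) else 0) +
        η₂ * (if m ∈ N (j - 1) then (-1 : ℝ) else 0)) / ν) * Mt m := by
    intro α ν η₁ η₂
    rw [← Finset.sum_sdiff (Finset.subset_univ (N j)), ← Finset.sum_sdiff hsub,
      add_comm (∑ m ∈ N (j - 1), _), add_comm]
    congr 1
    · refine Finset.sum_congr rfl fun m hm => ?_
      have h1 : m ∉ N j := (Finset.mem_sdiff.1 hm).2
      have h2 : m ∉ N (j - 1) := fun h => h1 (hsub h)
      simp [h1, h2]
    · congr 1
      · refine Finset.sum_congr rfl fun m hm => ?_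
        obtain ⟨h1, h2⟩ := Finset.mem_sdiff.1 hm
        simp [h1, h2]
      · refine Finset.sum_congr rfl fun m hm => ?_
        have h1 := hsub hm
        simp only [h1, hm, if_true]
        congr 2
        ring
  simp only [hZ]
  set S := {v : ℝ | ∃ M : 𝔐 → ℝ, IsModel M ∧ MemNbhdModelSet N n k j M ∧ bootDist M Mt ≤ r ∧
      v * ∑ m ∈ N j, w m * M m = ∑ m ∈ N j, w m * ℓ m * M m} with hS
  have hSne : S.Nonempty := by
    refine ⟨(∑ m ∈ N j, w m * ℓ m * M0 m) / ∑ m ∈ N j, w m * M0 m, M0, hM0, hM0n, hM0r, ?_⟩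
    exact div_mul_cancel₀ _ (hWpos M0 hM0 hM0n).ne'
  have hSb : BddAbove S := by
    refine ⟨∑ m, |ℓ m|, ?_⟩
    rintro v ⟨M, hM, hMn, -, hv⟩
    have hW := hWpos M hM hMn
    refine le_of_mul_le_mul_right ?_ hW
    rw [hv, Finset.mul_sum]
    refine Finset.sum_le_sum fun m _ => ?_
    have h1 : ℓ m ≤ ∑ m, |ℓ m| := (le_abs_self _).trans
      (Finset.single_le_sum (f := fun m => |ℓ m|) (fun i _ => abs_nonneg _) (Finset.mem_univ m))
    have h2 := mul_le_mul_of_nonneg_right h1 (mul_nonneg (hw m).le (hM.1 m))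
    linarith
  set T := {α : ℝ | ∃ ν : ℝ, 0 < ν ∧ ∃ η₁ : ℝ, 0 ≤ η₁ ∧ ∃ η₂ : ℝ, 0 ≤ η₂ ∧
      ν * Real.log (∑ m, Real.exp (((if m ∈ N j then (ℓ m - α) * w m else 0) +
        η₁ * (if m ∈ N j then (1 : ℝ) else 0) +
        η₂ * (if m ∈ N (j - 1) then (-1 : ℝ) else 0)) / ν) * Mt m) +
          r * ν - ((k : ℝ) / n) * (η₁ - η₂) - η₂ / n ≤ 0} with hT
  have weak : ∀ v ∈ S, ∀ α ∈ T, v ≤ α := by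
    rintro v ⟨M, hM, hMn, hMr, hv⟩ α ⟨ν, hν, η₁, h1, η₂, h2, hle⟩
    have hW := hWpos M hM hMn
    have hG := gibbs Mt hMtpos M hM (fun m => (if m ∈ N j then (ℓ m - α) * w m else 0) +
      η₁ * (if m ∈ N j then (1 : ℝ) else 0) +
      η₂ * (if m ∈ N (j - 1) then (-1 : ℝ) else 0)) ν hν
    have hexp : ∑ m, ((if m ∈ N j then (ℓ m - α) * w m else 0) +
      η₁ * (if m ∈ N j then (1 : ℝ) else 0) +
      η₂ * (if m ∈ N (j - 1) then (-1 : ℝ) else 0)) * M m =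
      ∑ m, (if m ∈ N j then (ℓ m - α) * w m else 0) * M m +
      η₁ * ∑ m, (if m ∈ N j then (1 : ℝ) else 0) * M m +
      η₂ * ∑ m, (if m ∈ N (j - 1) then (-1 : ℝ) else 0) * M m := by
      simp only [Finset.mul_sum, ← Finset.sum_add_distrib]
      exact Finset.sum_congr rfl fun m _ => by ring
    rw [hexp, linA, linB, linD, ← hv] at hG
    have e1 := mul_le_mul_of_nonneg_left hMn.1 h1
    have e2 := mul_le_mul_of_nonneg_left hMn.2 h2
    have e3 := mul_le_mul_of_nonneg_left hMr hν.le
    have e4 : η₂ * (((k : ℝ) - 1) / n) = (k : ℝ) / n * η₂ - η₂ / n := by ring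
    have : (v - α) * ∑ m ∈ N j, w m * M m ≤ 0 := by linarith
    by_contra hlt
    push Not at hlt
    have := mul_pos (sub_pos.2 hlt) hW
    linarith
  have strong : ∀ α, sSup S < α → α ∈ T := by
    intro α hα
    obtain ⟨ν, hν, η₁, h1, η₂, h2, h⟩ := core Mt hMtpos hMt
      (fun m => if m ∈ N j then (ℓ m - α) * w m else 0)
      (fun m => if m ∈ N j then (1 : ℝ) else 0)
      (fun m => if m ∈ N (j - 1) then (-1 : ℝ) else 0) ((k : ℝ) / n) (-(((k : ℝ) - 1) / n)) r
      M0 hM0 (by rw [linB]; exact hM0n.1) (by rw [linD]; exact neg_le_neg hM0n.2) hM0r (by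
        intro M hM hb hd hr'
        rw [linB] at hb
        rw [linD] at hd
        have hMn : MemNbhdModelSet N n k j M := ⟨hb, neg_le_neg_iff.1 hd⟩
        have hW := hWpos M hM hMn
        rw [linA]
        have hmem : (∑ m ∈ N j, w m * ℓ m * M m) / (∑ m ∈ N j, w m * M m) ∈ S :=
          ⟨M, hM, hMn, hr', div_mul_cancel₀ _ hW.ne'⟩
        have := (le_csSup hSb hmem).trans_lt hα
        rw [div_lt_iff₀ hW] at this
        linarith)
    refine ⟨ν, hν, η₁, h1, η₂, h2, le_trans (le_of_eq ?_) h⟩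
    ring
  have hTne : T.Nonempty := ⟨_, strong (sSup S + 1) (by linarith)⟩
  apply le_antisymm
  · exact csSup_le hSne fun v hv => le_csInf hTne fun α hα => weak v hv α hα
  · refine le_of_forall_gt_imp_ge_of_dense fun α hα => ?_
    exact csInf_le ⟨sSup S, fun α' hα' => csSup_le hSne fun v hv => weak v hv α' hα'⟩ (strong α hα)
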